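/- Suppose (d+1)/2 ≤ α ≤ d − m (and α < d). Then for every β with 0 < β < α − 1 there exists a constant C_β such that for every μ ∈ M_d and every R > 1, ∫_{B^{d−1}(0,1)} |μ̂(R(ξ, ⟨Mξ,ξ⟩))|² √(1+4|ξ|²) dξ ≤ C_β · R^{−β} · I_α(μ). (Equivalently, β(α, H_m^{d−1}) ≥ α − 1 on this range.) -/

import Mathlib

open MeasureTheory Metric
open scoped ENNReal NNReal

noncomputable section

/-- The quadratic form `⟨Mξ, ξ⟩` on `ℝ^{d-1}`, where the diagonal matrix `M` has its first
`d-1-m` diagonal entries equal to `+1` and its last `m` diagonal entries equal to `-1`. -/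
def hypQ (d m : ℕ) (ξ : EuclideanSpace ℝ (Fin (d - 1))) : ℝ :=
  ∑ i : Fin (d - 1), (if (i : ℕ) < d - 1 - m then (1 : ℝ) else -1) * ξ i ^ 2

/-- The point `(ξ, ⟨Mξ, ξ⟩) ∈ ℝ^d` on the hyperbolic paraboloid. -/
def hypLift (d m : ℕ) (ξ : EuclideanSpace ℝ (Fin (d - 1))) : EuclideanSpace ℝ (Fin d) :=
  (EuclideanSpace.equiv (Fin d) ℝ).symm
    (fun i => if h : (i : ℕ) < d - 1 then ξ ⟨i, h⟩ else hypQ d m ξ)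

/-- The Fourier transform `μ̂(ζ) = ∫ e^{-i x·ζ} dμ(x)` of a measure on `ℝ^d`. -/
def ftM {d : ℕ} (μ : Measure (EuclideanSpace ℝ (Fin d))) (ζ : EuclideanSpace ℝ (Fin d)) : ℂ :=
  ∫ x, Complex.exp (-(Complex.I * (((∑ i, x i * ζ i) : ℝ) : ℂ))) ∂μ

/-- The `α`-dimensional energy `I_α(μ) = ∬ |x-y|^{-α} dμ(x) dμ(y)`. -/
def energy {d : ℕ} (α : ℝ) (μ : Measure (EuclideanSpace ℝ (Fin d))) : ℝ≥0∞ :=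
  ∫⁻ x, ∫⁻ y, ENNReal.ofReal (dist x y) ^ (-α) ∂μ ∂μ

/-- The hyperbolic average `∫_{B^{d-1}(0,1)} |μ̂(R(ξ,⟨Mξ,ξ⟩))|² √(1+4|ξ|²) dξ`. -/
def hypAvg (d m : ℕ) (μ : Measure (EuclideanSpace ℝ (Fin d))) (R : ℝ) : ℝ :=
  ∫ ξ in ball (0 : EuclideanSpace ℝ (Fin (d - 1))) 1,
    ‖ftM μ (R • hypLift d m ξ)‖ ^ 2 * Real.sqrt (1 + 4 * ‖ξ‖ ^ 2)

/-- The decay estimate `∫_H |μ̂(Rξ)|² dσ(ξ) ≤ C R^{-β} I_α(μ)` holds with some constant `C`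
uniformly over measures in `M_d` and all `R > 1`. -/
def decayBound (d m : ℕ) (α β : ℝ) : Prop :=
  ∃ C : ℝ, 0 < C ∧ ∀ μ : Measure (EuclideanSpace ℝ (Fin d)), IsFiniteMeasure μ →
    μ ((closedBall 0 1)ᶜ) = 0 → ∀ R : ℝ, 1 < R →
    ENNReal.ofReal (hypAvg d m μ R) ≤ ENNReal.ofReal (C * R ^ (-β)) * energy α μ

/-- The decay estimate with exponent `β` fails for every constant `C > 0`: there is a measure
in `M_d` with finite positive `α`-energy and an `R > 1` violating the estimate. -/
def decayFails (d m : ℕ) (α β : ℝ) : Prop :=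
  ∀ C : ℝ, 0 < C → ∃ μ : Measure (EuclideanSpace ℝ (Fin d)), IsFiniteMeasure μ ∧
    μ ((closedBall 0 1)ᶜ) = 0 ∧ 0 < energy α μ ∧ energy α μ ≠ ⊤ ∧
    ∃ R : ℝ, 1 < R ∧ C * R ^ (-β) * (energy α μ).toReal < hypAvg d m μ R


section gen
set_option linter.unusedSectionVars false
variable {V : Type*} [NormedAddCommGroup V] [InnerProductSpace ℝ V] [FiniteDimensional ℝ V]
  [MeasurableSpace V] [BorelSpace V]

def ph (x η : V) : ℂ := Complex.exp (-(Complex.I * ((inner ℝ x η : ℝ) : ℂ)))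

lemma norm_ph (x η : V) : ‖ph x η‖ = 1 := by
  unfold ph
  rw [Complex.norm_exp]; simp

lemma cont_ph : Continuous (fun p : V × V => ph p.1 p.2) := by
  unfold ph
  fun_prop

def FF (μ : Measure V) (g : V → ℝ) (η : V) : ℂ := ∫ x, ph x η * (g x : ℂ) ∂μ

lemma FF_meas (μ : Measure V) [IsFiniteMeasure μ] (g : V → ℝ) (hg : Continuous g) :
    StronglyMeasurable (FF μ g) := by
  unfold FF
  apply StronglyMeasurable.integral_prod_right (f := fun η x => ph x η * (g x : ℂ))
  apply Continuous.stronglyMeasurable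
  have := cont_ph (V := V)
  have h2 : Continuous (fun p : V × V => ph p.2 p.1) := this.comp continuous_swap
  unfold Function.uncurry
  fun_prop

lemma FF_bound (μ : Measure V) [IsFiniteMeasure μ] (g : V → ℝ) (hg2 : ∀ x, |g x| ≤ 2) (η : V) :
    ‖FF μ g η‖ ≤ 2 * μ.real Set.univ := by
  apply norm_integral_le_of_norm_le_const
  refine Filter.Eventually.of_forall fun x => ?_
  simp [norm_ph, hg2 x]

lemma gauss (b : ℝ) (hb : 0 < b) (w : V) :
    ∫ v : V, Complex.exp (Complex.I * (inner ℝ w v : ℝ)) * (Real.exp (-b * ‖v‖ ^ 2) : ℂ) =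
      (((Real.pi / b) ^ (Module.finrank ℝ V / 2 : ℝ) * Real.exp (- ‖w‖ ^ 2 / (4 * b)) : ℝ) : ℂ) := by
  have := GaussianFourier.integral_cexp_neg_mul_sq_norm_add (b := (b : ℂ)) (by simpa using hb)
    Complex.I w
  rw [Complex.ofReal_mul, Complex.ofReal_cpow (by positivity)]
  convert! this using 3
  · rw [Complex.ofReal_exp, ← Complex.exp_add]
    push_cast
    congr 1
    ring
  · simp
  · simp
  · push_cast; rw [Complex.I_sq]; ring_nf

lemma gauss_int (b : ℝ) (hb : 0 < b) :
    Integrable (fun v : V => Real.exp (-b * ‖v‖ ^ 2)) := by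
  have := GaussianFourier.integrable_cexp_neg_mul_sq_norm_add (V := V) (b := (b : ℂ))
    (by simpa using hb) 0 0
  have := this.norm
  refine this.congr (Filter.Eventually.of_forall fun v => ?_)
  simp only [Complex.norm_exp]
  congr 1
  have : (-(b:ℂ) * (‖v‖:ℂ)^2 + 0 * ((inner ℝ (0:V) v : ℝ):ℂ)) = ((-b * ‖v‖^2 : ℝ) : ℂ) := by
    push_cast; ring
  rw [this, Complex.ofReal_re]

lemma step1 (μ : Measure V) [IsFiniteMeasure μ] (g : V → ℝ) (hg : Continuous g)
    (hg2 : ∀ x, |g x| ≤ 2) (b : ℝ) (hb : 0 < b) :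
    ∫⁻ η, ‖FF μ g η‖ₑ ^ 2 * ENNReal.ofReal (Real.exp (-b * ‖η‖ ^ 2)) ≤
      ∫⁻ x, ∫⁻ y, ENNReal.ofReal (4 * ((Real.pi / b) ^ (Module.finrank ℝ V / 2 : ℝ) *
        Real.exp (- ‖x - y‖ ^ 2 / (4 * b)))) ∂μ ∂μ := by
  have hF := FF_meas μ g hg
  have hcp := cont_ph (V := V)
  set f : V → ℝ := fun η => ‖FF μ g η‖ ^ 2 * Real.exp (-b * ‖η‖ ^ 2) with hf
  have hf0 : ∀ η, 0 ≤ f η := fun η => by positivity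
  have hfi : Integrable f := by
    refine (gauss_int (V := V) b hb).bdd_mul (c := (2 * μ.real Set.univ)^2) ?_ ?_
    · exact (hF.norm.pow 2).aestronglyMeasurable
    · refine Filter.Eventually.of_forall fun x => ?_
      rw [norm_pow, norm_norm]
      exact pow_le_pow_left₀ (norm_nonneg _) (FF_bound μ g hg2 x) 2
  have e1 : ∫⁻ η, ‖FF μ g η‖ₑ ^ 2 * ENNReal.ofReal (Real.exp (-b * ‖η‖ ^ 2)) =
      ‖((∫ η, f η : ℝ) : ℂ)‖ₑ := by
    have h1 : ‖((∫ η, f η : ℝ) : ℂ)‖ₑ = ENNReal.ofReal (∫ η, f η) := by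
      rw [← ofReal_norm, Complex.norm_real, Real.norm_of_nonneg (integral_nonneg hf0)]
    rw [h1, ofReal_integral_eq_lintegral_ofReal hfi (Filter.Eventually.of_forall hf0)]
    congr 1; ext η
    rw [hf]; simp only
    rw [ENNReal.ofReal_mul (by positivity), ENNReal.ofReal_pow (by positivity), ofReal_norm]
  rw [e1]
  let G : V → V × V → ℂ := fun η p =>
    (Complex.exp (Complex.I * (inner ℝ (p.2 - p.1) η : ℝ)) * (Real.exp (-b * ‖η‖ ^ 2) : ℂ))
      * ((g p.1 * g p.2 : ℝ) : ℂ)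
  have e2 : ((∫ η, f η : ℝ) : ℂ) = ∫ η, ∫ p, G η p ∂(μ.prod μ) := by
    rw [← integral_complex_ofReal]
    congr 1; ext η
    have hc : ∀ z : ℂ, ((‖z‖^2 : ℝ) : ℂ) = z * (starRingEnd ℂ) z := fun z => by
      rw [Complex.mul_conj, Complex.normSq_eq_norm_sq]
    rw [hf]; simp only
    rw [Complex.ofReal_mul, hc]
    unfold FF
    rw [← integral_conj, ← integral_prod_mul, ← integral_mul_const]
    congr 1; ext p
    simp only [G, ph, map_mul, Complex.conj_ofReal, ← Complex.exp_conj, map_neg, Complex.conj_I]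
    rw [inner_sub_left]
    push_cast
    rw [mul_sub, sub_eq_add_neg, Complex.exp_add]
    ring_nf
  have hGi : Integrable (Function.uncurry G) ((volume : Measure V).prod (μ.prod μ)) := by
    have hb1 : Integrable (fun z : V × (V × V) => Real.exp (-b * ‖z.1‖^2) * 4)
      ((volume : Measure V).prod (μ.prod μ)) :=
      Integrable.mul_prod (gauss_int b hb) (integrable_const (4:ℝ))
    refine hb1.mono' ?_ ?_
    · apply Continuous.aestronglyMeasurable
      unfold Function.uncurry
      simp only [G]
      fun_prop
    · refine Filter.Eventually.of_forall fun z => ?_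
      simp only [Function.uncurry, G, norm_mul, Complex.norm_real]
      have : ‖Complex.exp (Complex.I * (inner ℝ (z.2.2 - z.2.1) z.1 : ℝ))‖ = 1 := by
        rw [Complex.norm_exp]; simp
      rw [this, one_mul, Real.norm_of_nonneg (Real.exp_pos _).le]
      have h1 := hg2 z.2.1
      have h2 := hg2 z.2.2
      gcongr
      rw [Real.norm_eq_abs, Real.norm_eq_abs]
      nlinarith [abs_nonneg (g z.2.1), abs_nonneg (g z.2.2)]
  rw [e2, integral_integral_swap hGi]
  refine (enorm_integral_le_lintegral_enorm _).trans ?_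
  rw [← lintegral_prod (f := fun p : V × V => ENNReal.ofReal (4 * ((Real.pi / b) ^ (Module.finrank ℝ V / 2 : ℝ) *
        Real.exp (- ‖p.1 - p.2‖ ^ 2 / (4 * b)))))]
  · apply lintegral_mono
    intro p
    simp only [G]
    rw [integral_mul_const, gauss b hb, ← Complex.ofReal_mul, ← ofReal_norm, Complex.norm_real,
      norm_mul, mul_comm]
    apply ENNReal.ofReal_le_ofReal
    rw [Real.norm_of_nonneg (by positivity : 0 ≤ (Real.pi / b) ^ (Module.finrank ℝ V / 2 : ℝ) *
        Real.exp (- ‖p.2 - p.1‖ ^ 2 / (4 * b))), norm_sub_rev]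
    gcongr
    have h1 := hg2 p.1
    have h2 := hg2 p.2
    rw [norm_mul, Real.norm_eq_abs, Real.norm_eq_abs]
    nlinarith [abs_nonneg (g p.1), abs_nonneg (g p.2)]
  · apply Measurable.aemeasurable
    apply ENNReal.measurable_ofReal.comp
    apply Continuous.measurable
    fun_prop

lemma step2 (μ : Measure V) [IsFiniteMeasure μ] (g : V → ℝ) (hg : Continuous g)
    (hg2 : ∀ x, |g x| ≤ 2) (ζ : V) :
    ‖∫ x, ph x ζ * ((g x * Real.exp (- ‖x‖^2 / 2) : ℝ) : ℂ) ∂μ‖ₑ ^ 2 ≤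
      ∫⁻ η, ENNReal.ofReal (Real.exp (- ‖ζ - η‖ ^ 2 / 2)) * ‖FF μ g η‖ₑ ^ 2 := by
  have hF := FF_meas μ g hg
  have hcp := cont_ph (V := V)
  set c : ℝ := (2 * Real.pi) ^ (Module.finrank ℝ V / 2 : ℝ) with hc
  have hc1 : 1 ≤ c := Real.one_le_rpow (by nlinarith [Real.pi_gt_three]) (by positivity)
  let G : V → V → ℂ := fun x η => (ph x (ζ - η) * (g x : ℂ)) * (Real.exp (-(1/2) * ‖η‖^2) : ℂ)
  have e1 : (c : ℂ) * ∫ x, ph x ζ * ((g x * Real.exp (- ‖x‖^2 / 2) : ℝ) : ℂ) ∂μ =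
      ∫ x, (∫ η, G x η) ∂μ := by
    rw [← integral_const_mul]
    congr 1; ext x
    have := gauss (V := V) (1/2) (by norm_num) x
    have h2 : Real.pi / (1/2) = 2 * Real.pi := by ring
    rw [h2, ← hc, show -‖x‖^2/(4*(1/2)) = -‖x‖^2/2 by ring] at this
    have h3 : (c:ℂ) * (ph x ζ * ((g x * Real.exp (- ‖x‖^2 / 2) : ℝ) : ℂ)) =
      (ph x ζ * (g x : ℂ)) * ((c * Real.exp (- ‖x‖^2 / 2) : ℝ) : ℂ) := by push_cast; ring
    rw [h3, ← this, ← integral_const_mul]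
    congr 1; ext η
    simp only [G, ph]
    rw [inner_sub_right]
    have : Complex.exp (-(Complex.I * ((inner ℝ x ζ - inner ℝ x η : ℝ) : ℂ))) =
      Complex.exp (-(Complex.I * ((inner ℝ x ζ : ℝ) : ℂ))) * Complex.exp (Complex.I * ((inner ℝ x η : ℝ) : ℂ)) := by
      rw [← Complex.exp_add]; push_cast; ring_nf
    rw [this]; ring
  have hGi : Integrable (Function.uncurry G) (μ.prod (volume : Measure V)) := by
    have hb1 : Integrable (fun z : V × V => 2 * Real.exp (-(1/2) * ‖z.2‖^2))
      (μ.prod (volume : Measure V)) :=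
      Integrable.mul_prod (integrable_const (2:ℝ)) (gauss_int (1/2) (by norm_num))
    refine hb1.mono' ?_ ?_
    · apply Continuous.aestronglyMeasurable
      have : Continuous (fun z : V × V => ph z.1 (ζ - z.2)) :=
        hcp.comp (continuous_fst.prodMk (continuous_const.sub continuous_snd))
      unfold Function.uncurry
      simp only [G]
      fun_prop
    · refine Filter.Eventually.of_forall fun z => ?_
      simp only [Function.uncurry, G, norm_mul, Complex.norm_real, norm_ph, one_mul]
      rw [Real.norm_of_nonneg (Real.exp_pos _).le]
      gcongr
      exact hg2 _
  have e2 : ∫ x, (∫ η, G x η) ∂μ = ∫ η, FF μ g (ζ - η) * (Real.exp (-(1/2) * ‖η‖^2) : ℂ) := by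
    rw [integral_integral_swap hGi]
    congr 1; ext η
    simp only [G]
    rw [integral_mul_const]; rfl
  rw [e2] at e1
  set A := ∫ x, ph x ζ * ((g x * Real.exp (- ‖x‖^2 / 2) : ℝ) : ℂ) ∂μ with hA
  let u : V → ℝ≥0∞ := fun η => ENNReal.ofReal (Real.exp (-(1/4) * ‖η‖^2))
  have hu2 : ∀ η, u η ^ 2 = ENNReal.ofReal (Real.exp (-(1/2) * ‖η‖^2)) := fun η => by
    simp only [u]
    rw [← ENNReal.ofReal_pow (by positivity), ← Real.exp_nat_mul]
    congr 2; push_cast; ring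
  have hum : Measurable u := by
    apply ENNReal.measurable_ofReal.comp
    apply Continuous.measurable
    fun_prop
  have hFm : Measurable (fun η => ‖FF μ g (ζ - η)‖ₑ) :=
    (hF.measurable.comp (measurable_const.sub measurable_id)).enorm
  have h4 : ENNReal.ofReal c * ‖A‖ₑ ≤ ∫⁻ η, (u * (fun η => u η * ‖FF μ g (ζ - η)‖ₑ)) η := by
    have : ENNReal.ofReal c * ‖A‖ₑ = ‖(c:ℂ) * A‖ₑ := by
      rw [enorm_mul, ← ofReal_norm (c:ℂ), Complex.norm_real, Real.norm_of_nonneg (by linarith)]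
    rw [this, e1]
    refine (enorm_integral_le_lintegral_enorm _).trans (lintegral_mono fun η => ?_)
    simp only [Pi.mul_apply]
    rw [enorm_mul, ← mul_assoc, ← sq, hu2, ← ofReal_norm ((Real.exp _ : ℝ) : ℂ), Complex.norm_real,
      Real.norm_of_nonneg (by positivity), mul_comm]
  have h5 := h4.trans (ENNReal.lintegral_mul_le_Lp_mul_Lq volume Real.HolderConjugate.two_two
    hum.aemeasurable (hum.mul hFm).aemeasurable)
  have h6 : (ENNReal.ofReal c * ‖A‖ₑ)^2 ≤ (∫⁻ η, u η ^ 2) * ∫⁻ η, (u η * ‖FF μ g (ζ - η)‖ₑ) ^ 2 := by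
    have := pow_le_pow_left₀ (by simp) h5 2
    have hs : ∀ z : ℝ≥0∞, (z ^ (1/(2:ℝ))) ^ 2 = z := fun z => by
      rw [← ENNReal.rpow_natCast, ← ENNReal.rpow_mul]; norm_num
    rw [mul_pow (_ ^ (1/(2:ℝ))), hs, hs] at this
    simpa only [ENNReal.rpow_ofNat] using this
  have h7 : ∫⁻ η, u η ^ 2 = ENNReal.ofReal c := by
    simp_rw [hu2]
    rw [← ofReal_integral_eq_lintegral_ofReal (gauss_int (1/2) (by norm_num))
      (Filter.Eventually.of_forall fun _ => by positivity),
      GaussianFourier.integral_rexp_neg_mul_sq_norm (by norm_num), hc]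
    congr 2; ring
  have h8 : ∫⁻ η, (u η * ‖FF μ g (ζ - η)‖ₑ) ^ 2 =
    ∫⁻ η, ENNReal.ofReal (Real.exp (- ‖ζ - η‖ ^ 2 / 2)) * ‖FF μ g η‖ₑ ^ 2 := by
    rw [← lintegral_sub_left_eq_self (μ := (volume : Measure V)) _ ζ]
    congr 1; ext η
    rw [mul_pow, hu2, sub_sub_cancel]
    congr 3; ring
  rw [h7, h8, mul_pow, sq, mul_assoc] at h6
  have hc0 : ENNReal.ofReal c ≠ 0 := by simp; linarith
  have h9 := (ENNReal.mul_le_mul_iff_right hc0 ENNReal.ofReal_ne_top).1 h6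
  refine le_trans ?_ h9
  refine le_mul_of_one_le_left (by simp) ?_
  simpa using hc1
end gen

lemma sum_split (d : ℕ) (hd : 3 ≤ d) (f : Fin d → ℝ) :
    ∑ i, f i = ∑ i : Fin (d - 1), f ⟨i, by omega⟩ + f ⟨d - 1, by omega⟩ := by
  obtain ⟨n, rfl⟩ : ∃ n, d = n + 1 := ⟨d - 1, by omega⟩
  exact Fin.sum_univ_castSucc f

lemma hypLift_lt (d m : ℕ) (ξ : EuclideanSpace ℝ (Fin (d - 1))) (i : Fin (d - 1)) :
    hypLift d m ξ ⟨i, by omega⟩ = ξ i := by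
  simp [hypLift]

lemma hypLift_last (d m : ℕ) (hd : 3 ≤ d) (ξ : EuclideanSpace ℝ (Fin (d - 1))) :
    hypLift d m ξ ⟨d - 1, by omega⟩ = hypQ d m ξ := by
  simp [hypLift]

lemma hypQ_abs (d m : ℕ) (ξ : EuclideanSpace ℝ (Fin (d - 1))) : |hypQ d m ξ| ≤ ‖ξ‖ ^ 2 := by
  unfold hypQ
  rw [EuclideanSpace.real_norm_sq_eq]
  refine (Finset.abs_sum_le_sum_abs _ _).trans (Finset.sum_le_sum fun i _ => ?_)
  split_ifs <;> simp

lemma hypLift_norm (d m : ℕ) (hd : 3 ≤ d) (ξ : EuclideanSpace ℝ (Fin (d - 1))) (h : ‖ξ‖ < 1) :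
    ‖hypLift d m ξ‖ ^ 2 ≤ 2 := by
  rw [EuclideanSpace.real_norm_sq_eq, sum_split d hd, hypLift_last d m hd]
  simp_rw [hypLift_lt]
  rw [← EuclideanSpace.real_norm_sq_eq]
  have h1 := hypQ_abs d m ξ
  have h2 : ‖ξ‖ ^ 2 ≤ 1 := by nlinarith [norm_nonneg ξ]
  have h3 : hypQ d m ξ ^ 2 ≤ 1 := by
    rw [sq_le_one_iff_abs_le_one]; linarith
  linarith

lemma hypLift_cont (d m : ℕ) : Continuous (hypLift d m) := by
  unfold hypLift
  apply (EuclideanSpace.equiv (Fin d) ℝ).symm.continuous.comp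
  apply continuous_pi
  intro i
  unfold hypQ
  split_ifs <;> fun_prop

lemma proj_le (d m : ℕ) (hd : 3 ≤ d) (ξ : EuclideanSpace ℝ (Fin (d - 1)))
    (η : EuclideanSpace ℝ (Fin d)) (R : ℝ) :
    ‖R • ξ - WithLp.toLp 2 (fun i : Fin (d - 1) => η ⟨i, by omega⟩)‖ ^ 2 ≤
      ‖R • hypLift d m ξ - η‖ ^ 2 := by
  rw [EuclideanSpace.real_norm_sq_eq, EuclideanSpace.real_norm_sq_eq, sum_split d hd]
  simp only [PiLp.sub_apply, PiLp.smul_apply, hypLift_lt]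
  have := sq_nonneg (R • hypLift d m ξ ⟨d - 1, by omega⟩ - η ⟨d - 1, by omega⟩)
  linarith

lemma kernel_bound (d m : ℕ) (hd : 3 ≤ d) (R : ℝ) (hR : 1 < R) (η : EuclideanSpace ℝ (Fin d)) :
    ∫⁻ ξ in ball (0 : EuclideanSpace ℝ (Fin (d - 1))) 1,
      ENNReal.ofReal (Real.exp (- ‖R • hypLift d m ξ - η‖ ^ 2 / 2)) ≤
    ENNReal.ofReal (2 * (Real.pi / (R ^ 2 / 4)) ^ (((d - 1 : ℕ) : ℝ) / 2)) *
      ENNReal.ofReal (Real.exp (-(1 / (8 * R ^ 2)) * ‖η‖ ^ 2)) := by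
  have hR0 : 0 < R := by linarith
  set a : EuclideanSpace ℝ (Fin (d - 1)) :=
    WithLp.toLp 2 (fun i : Fin (d - 1) => η ⟨i, by omega⟩) with ha
  set b := 1 / (8 * R ^ 2) with hb
  have hpt : ∀ ξ ∈ ball (0 : EuclideanSpace ℝ (Fin (d - 1))) 1,
      ENNReal.ofReal (Real.exp (- ‖R • hypLift d m ξ - η‖ ^ 2 / 2)) ≤
      ENNReal.ofReal (2 * Real.exp (-b * ‖η‖ ^ 2)) *
        ENNReal.ofReal (Real.exp (-(R ^ 2 / 4) * ‖ξ - R⁻¹ • a‖ ^ 2)) := by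
    intro ξ hξ
    rw [← ENNReal.ofReal_mul (by positivity)]
    apply ENNReal.ofReal_le_ofReal
    have h1 := proj_le d m hd ξ η R
    rw [← ha] at h1
    have h2 : ‖R • ξ - a‖ ^ 2 = R ^ 2 * ‖ξ - R⁻¹ • a‖ ^ 2 := by
      have : R • ξ - a = R • (ξ - R⁻¹ • a) := by
        rw [smul_sub, smul_inv_smul₀ hR0.ne']
      rw [this, norm_smul, mul_pow, Real.norm_eq_abs, sq_abs]
    have h3 := hypLift_norm d m hd ξ (by simpa using hξ)
    set u := R • hypLift d m ξ with hu
    have h4 : ‖u‖ ^ 2 ≤ 2 * R ^ 2 := by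
      rw [hu, norm_smul, mul_pow, Real.norm_eq_abs, sq_abs]; nlinarith [sq_nonneg R]
    have h5 : ‖η‖ ^ 2 ≤ 2 * ‖u - η‖ ^ 2 + 2 * ‖u‖ ^ 2 := by
      have : ‖η‖ ≤ ‖u - η‖ + ‖u‖ := by
        have := norm_sub_le u (u - η)
        rw [sub_sub_cancel] at this; linarith
      nlinarith [norm_nonneg η, sq_nonneg (‖u - η‖ - ‖u‖), norm_nonneg u, norm_nonneg (u - η)]
    have h6 : b * ‖η‖ ^ 2 ≤ ‖u - η‖ ^ 2 / 4 + 1 / 2 := by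
      rw [hb, one_div_mul_eq_div, div_le_iff₀ (by positivity)]
      nlinarith [mul_nonneg (sq_nonneg ‖u - η‖) (by nlinarith : 0 ≤ R ^ 2 - 1)]
    have h7 : Real.exp (1 / 2) ≤ 2 := by
      have := Real.exp_bound_div_one_sub_of_interval (x := 1 / 2) (by norm_num) (by norm_num)
      norm_num at this ⊢; linarith
    calc Real.exp (-‖u - η‖ ^ 2 / 2)
        ≤ Real.exp (1 / 2 + -b * ‖η‖ ^ 2 + -(R ^ 2 / 4) * ‖ξ - R⁻¹ • a‖ ^ 2) := by
          apply Real.exp_le_exp.2; nlinarith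
      _ ≤ _ := by
          rw [Real.exp_add, Real.exp_add]; gcongr
  refine (setLIntegral_mono' measurableSet_ball hpt).trans ?_
  refine (setLIntegral_le_lintegral _ _).trans ?_
  rw [lintegral_const_mul' _ _ ENNReal.ofReal_ne_top]
  have : ∫⁻ ξ, ENNReal.ofReal (Real.exp (-(R ^ 2 / 4) * ‖ξ - R⁻¹ • a‖ ^ 2)) =
      ENNReal.ofReal ((Real.pi / (R ^ 2 / 4)) ^ (((d - 1 : ℕ) : ℝ) / 2)) := by
    rw [lintegral_sub_right_eq_self (fun ξ => ENNReal.ofReal (Real.exp (-(R ^ 2 / 4) * ‖ξ‖ ^ 2)))]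
    rw [← ofReal_integral_eq_lintegral_ofReal (gauss_int _ (by positivity))
      (Filter.Eventually.of_forall fun _ => by positivity),
      GaussianFourier.integral_rexp_neg_mul_sq_norm (by positivity)]
    simp
  rw [this, ← ENNReal.ofReal_mul (by positivity), ← ENNReal.ofReal_mul (by positivity)]
  apply le_of_eq
  congr 1; ring

lemma exp_pt (d : ℕ) (hd : 3 ≤ d) (α : ℝ) (h0 : 0 < α) (hα : α < d) (R : ℝ) (hR : 1 < R)
    (t : ℝ) (ht : 0 ≤ t) :
    ENNReal.ofReal (Real.exp (-(R * t) ^ 2)) ≤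
      ENNReal.ofReal (d.factorial * R ^ (-α)) * ENNReal.ofReal t ^ (-α) := by
  have hR0 : 0 < R := by linarith
  rcases ht.eq_or_lt with rfl | ht
  · have : ENNReal.ofReal (0:ℝ) ^ (-α) = ⊤ := by
      rw [ENNReal.ofReal_zero, ENNReal.zero_rpow_of_neg (by linarith)]
    rw [this, ENNReal.mul_top]
    · exact le_top
    · simp only [ne_eq, ENNReal.ofReal_eq_zero, not_le]; positivity
  rw [ENNReal.ofReal_rpow_of_pos ht, ← ENNReal.ofReal_mul (by positivity)]
  apply ENNReal.ofReal_le_ofReal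
  rw [mul_assoc, ← Real.mul_rpow hR0.le ht.le]
  set s := R * t with hs
  have hs0 : 0 < s := by positivity
  rw [Real.exp_neg, Real.rpow_neg hs0.le, ← div_eq_mul_inv, inv_eq_one_div,
    div_le_div_iff₀ (by positivity) (by positivity), one_mul]
  have hf : (1:ℝ) ≤ d.factorial := by exact_mod_cast d.factorial_pos
  rcases le_total s 1 with h | h
  · calc s ^ α ≤ 1 := Real.rpow_le_one hs0.le h h0.le
      _ ≤ d.factorial * Real.exp (s ^ 2) := by
        nlinarith [Real.one_le_exp (sq_nonneg s)]
  · have h1 : s ^ α ≤ (s ^ 2) ^ d := by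
      rw [← pow_mul, ← Real.rpow_natCast]
      apply Real.rpow_le_rpow_of_exponent_le h
      push_cast; have : (0:ℝ) ≤ d := by positivity
      linarith
    have h2 := Real.pow_div_factorial_le_exp (s ^ 2) (sq_nonneg s) d
    rw [div_le_iff₀ (by positivity)] at h2
    linarith

/-- if `(d+1)/2 <= a <= d - m` (and `a < d`), then for every `0 < b < a - 1`
the decay estimate holds, i.e. `beta(a, H_m^{d-1}) >= a - 1`. -/
theorem statement6 (d m : ℕ) (hd : 3 ≤ d) (hm1 : 1 ≤ m) (hm2 : 2 * m ≤ d - 1)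
    (α : ℝ) (hα1 : ((d : ℝ) + 1) / 2 ≤ α) (hα2 : α ≤ (d : ℝ) - m) (hαd : α < d)
    (β : ℝ) (hβ0 : 0 < β) (hβ : β < α - 1) :
    decayBound d m α β := by
  refine ⟨3 * (2 * (4 * Real.pi) ^ (((d - 1 : ℕ) : ℝ) / 2)) *
    (4 * (8 * Real.pi) ^ ((d : ℝ) / 2)) * d.factorial, by positivity, ?_⟩
  intro μ hμ hsupp R hR
  have hR0 : 0 < R := by linarith
  let g : EuclideanSpace ℝ (Fin d) → ℝ := fun x => Real.exp (min (‖x‖ ^ 2) 1 / 2)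
  have hg : Continuous g := by simp only [g]; fun_prop
  have hg2 : ∀ x, |g x| ≤ 2 := fun x => by
    have h7 : Real.exp (1 / 2) ≤ 2 := by
      have := Real.exp_bound_div_one_sub_of_interval (x := 1 / 2) (by norm_num) (by norm_num)
      norm_num at this ⊢; linarith
    simp only [g]
    rw [abs_of_pos (Real.exp_pos _)]
    refine le_trans (Real.exp_le_exp.2 ?_) h7
    gcongr
    exact min_le_right _ _
  have hft : ∀ ζ, ftM μ ζ = ∫ x, ph x ζ * ((g x * Real.exp (- ‖x‖^2 / 2) : ℝ) : ℂ) ∂μ := by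
    intro ζ
    unfold ftM
    apply integral_congr_ae
    have : ∀ᵐ x ∂μ, x ∈ closedBall (0 : EuclideanSpace ℝ (Fin d)) 1 := hsupp
    filter_upwards [this] with x hx
    have hx' : ‖x‖ ^ 2 ≤ 1 := by
      have : ‖x‖ ≤ 1 := by simpa using hx
      nlinarith [norm_nonneg x]
    have h1 : g x * Real.exp (- ‖x‖^2 / 2) = 1 := by
      simp only [g]
      rw [min_eq_left hx', ← Real.exp_add, ← Real.exp_zero]
      congr 1; ring
    have h2 : ∑ i, x i * ζ i = inner ℝ x ζ := by
      rw [PiLp.inner_apply]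
      apply Finset.sum_congr rfl
      intro i _
      simp [mul_comm]
    rw [h1, h2, ph]; simp
  set b := 1 / (8 * R ^ 2) with hb
  have hb0 : 0 < b := by positivity
  set K := ENNReal.ofReal (2 * (Real.pi / (R ^ 2 / 4)) ^ (((d - 1 : ℕ) : ℝ) / 2)) with hK
  have hFm : Measurable (fun η => ‖FF μ g η‖ₑ ^ 2) := (FF_meas μ g hg).measurable.enorm.pow_const 2
  have hlc := hypLift_cont d m
  have s1 : ENNReal.ofReal (hypAvg d m μ R) ≤
      ∫⁻ ξ in ball (0 : EuclideanSpace ℝ (Fin (d - 1))) 1, 3 *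
        ∫⁻ η, ENNReal.ofReal (Real.exp (- ‖R • hypLift d m ξ - η‖ ^ 2 / 2)) * ‖FF μ g η‖ₑ ^ 2 := by
    unfold hypAvg
    refine (Real.ofReal_le_enorm _).trans ((enorm_integral_le_lintegral_enorm _).trans ?_)
    refine setLIntegral_mono' measurableSet_ball fun ξ hξ => ?_
    rw [enorm_mul, mul_comm, enorm_pow, enorm_norm, hft]
    gcongr
    · rw [Real.enorm_of_nonneg (Real.sqrt_nonneg _)]
      apply ENNReal.ofReal_le_of_le_toReal
      have h1 : ‖ξ‖ < 1 := by simpa using hξ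
      rw [Real.sqrt_le_left (by simp)]
      simp
      nlinarith [norm_nonneg ξ]
    · exact step2 μ g hg hg2 _
  have s2 : ∫⁻ ξ in ball (0 : EuclideanSpace ℝ (Fin (d - 1))) 1, 3 *
        ∫⁻ η, ENNReal.ofReal (Real.exp (- ‖R • hypLift d m ξ - η‖ ^ 2 / 2)) * ‖FF μ g η‖ₑ ^ 2 ≤
      3 * (K * ∫⁻ η, ‖FF μ g η‖ₑ ^ 2 * ENNReal.ofReal (Real.exp (-b * ‖η‖ ^ 2))) := by
    rw [lintegral_const_mul' _ _ (by simp), lintegral_lintegral_swap]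
    · gcongr
      rw [← lintegral_const_mul' _ _ ENNReal.ofReal_ne_top]
      refine lintegral_mono fun η => ?_
      simp only
      rw [lintegral_mul_const' _ _ (by simp)]
      calc _ ≤ _ := mul_le_mul_left (kernel_bound d m hd R hR η) _
        _ = _ := by ring
    · apply Measurable.aemeasurable
      unfold Function.uncurry
      refine Measurable.mul ?_ (hFm.comp measurable_snd)
      apply ENNReal.measurable_ofReal.comp
      apply Continuous.measurable
      fun_prop
  have s3 := step1 μ g hg hg2 b hb0
  have s4 : ∫⁻ x, ∫⁻ y, ENNReal.ofReal (4 * ((Real.pi / b) ^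
        (Module.finrank ℝ (EuclideanSpace ℝ (Fin d)) / 2 : ℝ) *
        Real.exp (- ‖x - y‖ ^ 2 / (4 * b)))) ∂μ ∂μ ≤
      ENNReal.ofReal (4 * (Real.pi / b) ^ ((d : ℝ) / 2) * (d.factorial * R ^ (-α))) * energy α μ := by
    unfold energy
    rw [← lintegral_const_mul' _ _ ENNReal.ofReal_ne_top]
    refine lintegral_mono fun x => ?_
    rw [← lintegral_const_mul' _ _ ENNReal.ofReal_ne_top]
    refine lintegral_mono fun y => ?_
    rw [finrank_euclideanSpace_fin, ← mul_assoc, ENNReal.ofReal_mul (by positivity),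
      ENNReal.ofReal_mul (p := 4 * (Real.pi / b) ^ ((d : ℝ) / 2)) (by positivity), mul_assoc]
    gcongr
    refine le_trans ?_ (exp_pt d hd α (by linarith) hαd R hR _ dist_nonneg)
    apply ENNReal.ofReal_le_ofReal
    apply Real.exp_le_exp.2
    rw [dist_eq_norm, hb]
    have : -‖x - y‖ ^ 2 / (4 * (1 / (8 * R ^ 2))) = - (2 * (R * ‖x - y‖) ^ 2) := by
      field_simp; ring
    rw [this]
    nlinarith [sq_nonneg (R * ‖x - y‖)]
  refine (s1.trans s2).trans ?_
  refine (mul_le_mul_right (mul_le_mul_right (s3.trans s4) K) 3).trans ?_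
  rw [← mul_assoc, ← mul_assoc]
  gcongr
  rw [hK, show (3 : ℝ≥0∞) = ENNReal.ofReal 3 by simp, ← ENNReal.ofReal_mul (by positivity),
    ← ENNReal.ofReal_mul (by positivity)]
  apply ENNReal.ofReal_le_ofReal
  have r1 : (Real.pi / (R ^ 2 / 4)) ^ (((d - 1 : ℕ) : ℝ) / 2) =
      (4 * Real.pi) ^ (((d - 1 : ℕ) : ℝ) / 2) * R ^ (-((d:ℝ) - 1)) := by
    have : Real.pi / (R ^ 2 / 4) = (4 * Real.pi) * R ^ (-2 : ℝ) := by
      rw [Real.rpow_neg hR0.le, Real.rpow_ofNat]; field_simp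
    rw [this, Real.mul_rpow (by positivity) (by positivity), ← Real.rpow_mul hR0.le]
    congr 2
    rw [Nat.cast_sub (by omega)]; push_cast; ring
  have r2 : (Real.pi / b) ^ ((d : ℝ) / 2) = (8 * Real.pi) ^ ((d : ℝ) / 2) * R ^ (d : ℝ) := by
    have : Real.pi / b = (8 * Real.pi) * R ^ (2 : ℝ) := by
      rw [hb, Real.rpow_ofNat]; field_simp
    rw [this, Real.mul_rpow (by positivity) (by positivity), ← Real.rpow_mul hR0.le]
    congr 2; ring
  have r3 : R ^ (-((d:ℝ) - 1)) * R ^ (d : ℝ) * R ^ (-α) ≤ R ^ (-β) := by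
    rw [← Real.rpow_add hR0, ← Real.rpow_add hR0]
    apply Real.rpow_le_rpow_of_exponent_le hR.le
    linarith
  rw [r1, r2]
  set A := (4 * Real.pi) ^ (((d - 1 : ℕ) : ℝ) / 2)
  set B := (8 * Real.pi) ^ ((d : ℝ) / 2)
  calc _ = (3 * (2 * A) * (4 * B) * d.factorial) *
        (R ^ (-((d:ℝ) - 1)) * R ^ (d : ℝ) * R ^ (-α)) := by ring
    _ ≤ _ := by gcongr
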